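/- Let A be a ring that is left and right Noetherian, let d be a natural number, and suppose that A has injective dimension at most d as a left module over itself and finite injective dimension as a right module over itself. Then every left A-module M of finite flat dimension has projective dimension at most d. -/

import Mathlib

/-!
If `A` is a left and right Noetherian ring which has injective dimension at most `d`
as a left module over itself and finite injective dimension as a right module over
itself (i.e. `Aᵐᵒᵖ` has finite injective dimension over `Aᵐᵒᵖ`), then every left
`A`-module of finite flat dimension has projective dimension at most `d`.
-/

universe u

open CategoryTheory

/-- Lazard's criterion: a left `A`-module is flat if and only if every linear map
from a finitely presented module factors through a finite free module.  This
characterization of flatness is valid over arbitrary (noncommutative) rings. -/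
def ModuleFlat (A : Type u) [Ring A] (M : Type u) [AddCommGroup M] [Module A M] : Prop :=
  ∀ (N : ModuleCat.{u} A), Module.FinitePresentation A N →
    ∀ f : N →ₗ[A] M, ∃ (k : ℕ) (g : N →ₗ[A] (Fin k → A)) (h : (Fin k → A) →ₗ[A] M),
      h.comp g = f

/-- `M` has flat dimension at most `n`: there is an exact sequence
`0 → F_n → ⋯ → F_0 → M → 0` with every `F_i` flat (encoded as a flat resolution
which vanishes in degrees `> n`). -/
def HasFlatDimLE (A : Type u) [Ring A] (M : Type u) [AddCommGroup M] [Module A M]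
    (n : ℕ) : Prop :=
  ∃ (F : ℕ → ModuleCat.{u} A) (d : ∀ i : ℕ, F (i + 1) →ₗ[A] F i) (ε : F 0 →ₗ[A] M),
    (∀ i, ModuleFlat A (F i)) ∧ (∀ i, n < i → Subsingleton (F i)) ∧
    Function.Surjective ε ∧ LinearMap.range (d 0) = LinearMap.ker ε ∧
    ∀ i, LinearMap.range (d (i + 1)) = LinearMap.ker (d i)

/-- `M` has projective dimension at most `n`: there is an exact sequence
`0 → P_n → ⋯ → P_0 → M → 0` with every `P_i` projective. -/
def HasProjDimLE (A : Type u) [Ring A] (M : Type u) [AddCommGroup M] [Module A M]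
    (n : ℕ) : Prop :=
  ∃ (P : ℕ → ModuleCat.{u} A) (d : ∀ i : ℕ, P (i + 1) →ₗ[A] P i) (ε : P 0 →ₗ[A] M),
    (∀ i, Module.Projective A (P i)) ∧ (∀ i, n < i → Subsingleton (P i)) ∧
    Function.Surjective ε ∧ LinearMap.range (d 0) = LinearMap.ker ε ∧
    ∀ i, LinearMap.range (d (i + 1)) = LinearMap.ker (d i)

/-- `M` has injective dimension at most `n`: there is an exact sequence
`0 → M → I^0 → ⋯ → I^n → 0` with every `I^i` injective. -/
def HasInjDimLE (A : Type u) [Ring A] (M : Type u) [AddCommGroup M] [Module A M]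
    (n : ℕ) : Prop :=
  ∃ (I : ℕ → ModuleCat.{u} A) (d : ∀ i : ℕ, I i →ₗ[A] I (i + 1)) (ι : M →ₗ[A] I 0),
    (∀ i, Module.Injective A (I i)) ∧ (∀ i, n < i → Subsingleton (I i)) ∧
    Function.Injective ι ∧ LinearMap.range ι = LinearMap.ker (d 0) ∧
    ∀ i, LinearMap.range (d i) = LinearMap.ker (d (i + 1))


namespace FlatPD

open CategoryTheory Abelian

variable {A : Type u} [Ring A]

/-- A criterion for finite projective dimension by a class of modules closed under syzygies. -/
lemma projDim_of_class (C : ModuleCat.{u} A → Prop)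
    (hker : ∀ X, C X → C X.projectiveShortComplex.X₁) (n : ℕ) (X : ModuleCat.{u} A) (hX : C X)
    (h : ∀ Y, C Y → ∀ x : Ext.{u} X Y (n + 1), x = 0) : HasProjectiveDimensionLT X (n + 1) := by
  induction n generalizing X with
  | zero =>
    have hS := X.shortExact_projectiveShortComplex
    obtain ⟨x, hx⟩ := Ext.covariant_sequence_exact₃ X hS (Ext.mk₀ (𝟙 X)) (zero_add 1)
      (h _ (hker X hX) _)
    obtain ⟨s, rfl⟩ := Ext.homEquiv₀.symm.surjective x
    have hs : s ≫ X.projectiveShortComplex.g = 𝟙 X :=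
      Ext.homEquiv₀.symm.injective (by simpa using hx)
    have : Retract X X.projectiveShortComplex.X₂ := ⟨s, X.projectiveShortComplex.g, hs⟩
    have : Projective X.projectiveShortComplex.X₂ :=
      (IsProjective.iff_projective (R := A) _).1 inferInstance
    exact Retract.hasProjectiveDimensionLT (Y := X.projectiveShortComplex.X₂) ‹_› 1
  | succ n ih =>
    have hS := X.shortExact_projectiveShortComplex
    have hP : Projective X.projectiveShortComplex.X₂ :=
      (IsProjective.iff_projective (R := A) _).1 inferInstance
    refine hS.hasProjectiveDimensionLT_X₃ (n + 1) (ih _ (hker X hX) ?_) inferInstance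
    intro Y hY x
    obtain ⟨y, rfl⟩ := Ext.contravariant_sequence_exact₁ hS Y x (add_comm 1 (n + 1))
      (h Y hY _)
    rw [Ext.eq_zero_of_projective y, Ext.comp_zero]

/-- Baer's criterion for higher injective dimension. -/
lemma injDim_of_baer (n : ℕ) (F : ModuleCat.{u} A)
    (h : ∀ (I : Submodule A A) (x : Ext.{u} (ModuleCat.of A (A ⧸ I)) F (n + 1)), x = 0) :
    HasInjectiveDimensionLT F (n + 1) := by
  induction n generalizing F with
  | zero =>
    rw [zero_add, ← injective_iff_hasInjectiveDimensionLT_one]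
    refine (Module.injective_iff_injective_object A F).1 (Module.Baer.injective ?_)
    intro I f
    let S : ShortComplex (ModuleCat.{u} A) :=
      ModuleCat.shortComplexOfCompEqZero I.subtype I.mkQ (by ext; simp)
    have hS : S.ShortExact := ModuleCat.shortComplex_shortExact S
      (LinearMap.exact_subtype_mkQ I) I.subtype_injective I.mkQ_surjective
    obtain ⟨x, hx⟩ := Ext.contravariant_sequence_exact₁ hS F
      (Ext.mk₀ (ModuleCat.ofHom f : S.X₁ ⟶ F)) (add_comm 1 0) (h I _)
    obtain ⟨s, rfl⟩ := Ext.homEquiv₀.symm.surjective x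
    have hs : S.f ≫ s = ModuleCat.ofHom f :=
      Ext.homEquiv₀.symm.injective (by simpa using hx)
    refine ⟨s.hom, fun x hx => ?_⟩
    exact congrArg (fun t => t.hom ⟨x, hx⟩) hs
  | succ n ih =>
    obtain ⟨I, _, f, _⟩ := EnoughInjectives.presentation F
    have hS : (ShortComplex.mk _ _ (Limits.cokernel.condition f)).ShortExact :=
      { exact := ShortComplex.exact_cokernel f }
    refine hS.hasInjectiveDimensionLT_X₁ (n + 1) (ih _ ?_) inferInstance
    intro J x
    obtain ⟨y, rfl⟩ := Ext.covariant_sequence_exact₃ _ hS x rfl (h J _)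
    rw [Ext.eq_zero_of_injective y, Ext.zero_comp]

/-- Ext classes from f.g. modules into flat modules factor through finite free modules. -/
lemma ext_factor [IsNoetherianRing A] (F : ModuleCat.{u} A) (hF : ModuleFlat A F) (n : ℕ)
    (N : ModuleCat.{u} A) [Module.Finite A N] (x : Ext.{u} N F n) :
    ∃ (k : ℕ) (y : Ext.{u} N (ModuleCat.of A (Fin k → A)) n)
      (h : ModuleCat.of A (Fin k → A) ⟶ F), y.comp (Ext.mk₀ h) (add_zero n) = x := by
  induction n generalizing N with
  | zero =>
    obtain ⟨f, rfl⟩ := Ext.homEquiv₀.symm.surjective x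
    obtain ⟨k, g, h, e⟩ := hF N (Module.finitePresentation_of_finite A N) f.hom
    refine ⟨k, Ext.mk₀ (ModuleCat.ofHom g), ModuleCat.ofHom h, ?_⟩
    have : ModuleCat.ofHom g ≫ ModuleCat.ofHom h = f := by
      ext t; exact congrArg (fun q => q t) e
    simp [this]
  | succ n ih =>
    obtain ⟨m, p, hp⟩ := Module.Finite.exists_fin' A N
    let S : ShortComplex (ModuleCat.{u} A) :=
      ModuleCat.shortComplexOfCompEqZero (LinearMap.ker p).subtype p (by ext; simp)
    have hS : S.ShortExact := ModuleCat.shortComplex_shortExact S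
      (LinearMap.exact_subtype_ker_map p) (Submodule.subtype_injective _) hp
    have hP : Projective S.X₂ :=
      (IsProjective.iff_projective (Fin m → A)).1 inferInstance
    have : Module.Finite A S.X₁ := inferInstanceAs (Module.Finite A (LinearMap.ker p))
    obtain ⟨x', rfl⟩ := Ext.contravariant_sequence_exact₃ hS F x
      (Ext.eq_zero_of_projective _) (add_comm 1 n)
    obtain ⟨k, y, h, rfl⟩ := ih S.X₁ x'
    exact ⟨k, hS.extClass.comp y (add_comm 1 n), h, by
      rw [Ext.comp_assoc_of_third_deg_zero]⟩

lemma injDim_pi (n : ℕ) (h : HasInjectiveDimensionLT (ModuleCat.of A A) n) (k : ℕ) :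
    HasInjectiveDimensionLT (ModuleCat.of A (Fin k → A)) n := by
  induction k with
  | zero =>
    have : HasInjectiveDimensionLT (ModuleCat.of A (Fin 0 → A)) 0 :=
      (ModuleCat.isZero_of_subsingleton _).hasInjectiveDimensionLT_zero
    exact hasInjectiveDimensionLT_of_ge _ 0 n (Nat.zero_le _)
  | succ k ih =>
    let S : ShortComplex (ModuleCat.{u} A) :=
      ModuleCat.shortComplexOfCompEqZero (LinearMap.inl A A (Fin k → A))
        (LinearMap.snd A A (Fin k → A)) (by ext <;> simp)
    have hS : S.ShortExact := ModuleCat.shortComplex_shortExact S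
      (Function.Exact.inl_snd) LinearMap.inl_injective LinearMap.snd_surjective
    have : HasInjectiveDimensionLT (ModuleCat.of A (A × (Fin k → A))) n :=
      hS.hasInjectiveDimensionLT_X₂ n h ih
    exact hasInjectiveDimensionLT_of_iso
      (Fin.consLinearEquiv A (fun _ : Fin (k + 1) => A)).toModuleIso n

lemma injDim_flat [IsNoetherianRing A] (d : ℕ)
    (h : HasInjectiveDimensionLT (ModuleCat.of A A) (d + 1))
    (F : ModuleCat.{u} A) (hF : ModuleFlat A F) : HasInjectiveDimensionLT F (d + 1) := by
  refine injDim_of_baer d F fun I x => ?_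
  have : Module.Finite A (ModuleCat.of A (A ⧸ I)) :=
    inferInstanceAs (Module.Finite A (A ⧸ I))
  obtain ⟨k, y, h', rfl⟩ := ext_factor F hF (d + 1) _ x
  have := injDim_pi (d + 1) h k
  rw [y.eq_zero_of_hasInjectiveDimensionLT (d + 1) le_rfl, Ext.zero_comp]

lemma flat_of_free (P : Type u) [AddCommGroup P] [Module A P] [Module.Projective A P] :
    ModuleFlat A P := by
  intro N hN f
  obtain ⟨s, hs⟩ := Module.projective_def'.1 (inferInstance : Module.Projective A P)
  obtain ⟨T, hT⟩ := (inferInstance : Module.Finite A N).fg_top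
  classical
  let U : Finset P := T.biUnion fun t => (s (f t)).support
  have hU : ∀ x, s (f x) ∈ Finsupp.supported A A (U : Set P) := by
    have : (⊤ : Submodule A N) ≤ (Finsupp.supported A A (U : Set P)).comap (s ∘ₗ f) := by
      rw [← hT, Submodule.span_le]
      intro t ht
      simp only [SetLike.mem_coe, Submodule.mem_comap, Finsupp.mem_supported,
        LinearMap.comp_apply]
      exact_mod_cast Finset.subset_biUnion_of_mem (fun t => (s (f t)).support) ht
    exact fun x => this (Submodule.mem_top (x := x))
  let e : Finsupp.supported A A (U : Set P) ≃ₗ[A] (Fin U.card → A) :=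
    (Finsupp.supportedEquivFinsupp (U : Set P)).trans
      ((Finsupp.linearEquivFunOnFinite A A (U : Set P)).trans
        (LinearEquiv.funCongrLeft A A U.equivFin.symm))
  refine ⟨U.card, e.toLinearMap ∘ₗ (s ∘ₗ f).codRestrict _ hU,
    (Finsupp.linearCombination A id) ∘ₗ (Finsupp.supported A A (U : Set P)).subtype ∘ₗ
      e.symm.toLinearMap, ?_⟩
  ext x
  have := congrArg (fun q => q (f x)) hs
  simpa using this

lemma flat_ker [IsNoetherianRing A] {P F : Type u} [AddCommGroup P] [Module A P]
    [AddCommGroup F] [Module A F] [Module.Projective A P] (hF : ModuleFlat A F)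
    (p : P →ₗ[A] F) (hp : Function.Surjective p) : ModuleFlat A (LinearMap.ker p) := by
  intro N hN f
  obtain ⟨k, w, i, hi⟩ := flat_of_free (A := A) P N hN ((LinearMap.ker p).subtype ∘ₗ f)
  let c : ((Fin k → A) ⧸ LinearMap.range w) →ₗ[A] F :=
    (LinearMap.range w).liftQ (p ∘ₗ i) (by
      rintro _ ⟨x, rfl⟩
      have := congrArg (fun q => q x) hi
      simp only [LinearMap.comp_apply, Submodule.subtype_apply] at this
      simp [this])
  obtain ⟨m, a, b, hab⟩ := hF (ModuleCat.of A ((Fin k → A) ⧸ LinearMap.range w))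
    (Module.finitePresentation_of_finite A ((Fin k → A) ⧸ LinearMap.range w)) c
  obtain ⟨l, hl⟩ := Module.projective_lifting_property p b hp
  let a' : (Fin k → A) →ₗ[A] (Fin m → A) := a ∘ₗ (LinearMap.range w).mkQ
  refine ⟨k, w, (i - l ∘ₗ a').codRestrict _ fun x => ?_, ?_⟩
  · have h1 := congrArg (fun q => q (a' x)) hl
    have h2 := congrArg (fun q => q ((LinearMap.range w).mkQ x)) hab
    simp only [LinearMap.comp_apply] at h1 h2
    rw [LinearMap.mem_ker, LinearMap.sub_apply, map_sub, LinearMap.comp_apply, h1, sub_eq_zero]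
    exact h2.symm
  · ext x
    have h1 := congrArg (fun q => q x) hi
    have h2 : a' (w x) = 0 := by
      have : (LinearMap.range w).mkQ (w x) = 0 := by simp
      simp only [a', LinearMap.comp_apply, this]
      exact map_zero a
    simp only [LinearMap.comp_apply, Submodule.subtype_apply] at h1
    simp [h2, h1]

lemma projDim_flat [IsNoetherianRing A] (d : ℕ)
    (h : HasInjectiveDimensionLT (ModuleCat.of A A) (d + 1))
    (F : ModuleCat.{u} A) (hF : ModuleFlat A F) : HasProjectiveDimensionLT F (d + 1) := by
  refine projDim_of_class (fun X => ModuleFlat A X) (fun X hX => ?_) d F hF fun Y hY x => ?_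
  · have hs := (ModuleCat.epi_iff_surjective _).1 X.shortExact_projectiveShortComplex.epi_g
    exact flat_ker hX _ hs
  · have := injDim_flat d h Y hY
    exact x.eq_zero_of_hasInjectiveDimensionLT (d + 1) le_rfl

lemma projDim_of_flatRes (d n : ℕ)
    (hflat : ∀ F : ModuleCat.{u} A, ModuleFlat A F → HasProjectiveDimensionLT F (d + 1))
    (M : Type u) [AddCommGroup M] [Module A M]
    (F : ℕ → ModuleCat.{u} A) (δ : ∀ i : ℕ, F (i + 1) →ₗ[A] F i) (ε : F 0 →ₗ[A] M)
    (h1 : ∀ i, ModuleFlat A (F i)) (h2 : ∀ i, n ≤ i → Subsingleton (F i))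
    (h3 : Function.Surjective ε) (h4 : LinearMap.range (δ 0) = LinearMap.ker ε)
    (h5 : ∀ i, LinearMap.range (δ (i + 1)) = LinearMap.ker (δ i)) :
    HasProjectiveDimensionLT (ModuleCat.of A M) (n + d + 1) := by
  induction n generalizing M F with
  | zero =>
    have := h2 0 le_rfl
    have : Subsingleton M := h3.subsingleton
    have : HasProjectiveDimensionLT (ModuleCat.of A M) 0 :=
      (ModuleCat.isZero_of_subsingleton _).hasProjectiveDimensionLT_zero
    exact hasProjectiveDimensionLT_of_ge _ 0 _ (Nat.zero_le _)
  | succ n ih =>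
    let S : ShortComplex (ModuleCat.{u} A) :=
      ModuleCat.shortComplexOfCompEqZero (LinearMap.ker ε).subtype ε (by ext; simp)
    have hS : S.ShortExact := ModuleCat.shortComplex_shortExact S
      (LinearMap.exact_subtype_ker_map ε) (Submodule.subtype_injective _) h3
    have hK := ih (LinearMap.ker ε) (fun i => F (i + 1)) (fun i => δ (i + 1))
      ((δ 0).codRestrict _ fun x => h4 ▸ LinearMap.mem_range_self _ x)
      (fun i => h1 _) (fun i hi => h2 _ (by omega)) ?_ ?_ (fun i => h5 _)
    · have h0 := hflat (F 0) (h1 0)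
      have := hS.hasProjectiveDimensionLT_X₃ (n + d + 1) hK
        (hasProjectiveDimensionLT_of_ge (F 0) (d + 1) _ (by omega))
      exact hasProjectiveDimensionLT_of_ge (ModuleCat.of A M) (n + d + 1 + 1) _ (by omega)
    · rintro ⟨x, hx⟩
      obtain ⟨y, rfl⟩ := h4.symm ▸ hx
      exact ⟨y, rfl⟩
    · rw [h5 0, LinearMap.ker_codRestrict]

lemma injDim_of_injRes (n : ℕ) (M : Type u) [AddCommGroup M] [Module A M]
    (I : ℕ → ModuleCat.{u} A) (δ : ∀ i : ℕ, I i →ₗ[A] I (i + 1)) (ι : M →ₗ[A] I 0)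
    (h1 : ∀ i, Module.Injective A (I i)) (h2 : ∀ i, n ≤ i → Subsingleton (I i))
    (h3 : Function.Injective ι) (h4 : LinearMap.range ι = LinearMap.ker (δ 0))
    (h5 : ∀ i, LinearMap.range (δ i) = LinearMap.ker (δ (i + 1))) :
    HasInjectiveDimensionLT (ModuleCat.of A M) n := by
  induction n generalizing M I with
  | zero =>
    have := h2 0 le_rfl
    have : Subsingleton M := h3.subsingleton
    exact (ModuleCat.isZero_of_subsingleton _).hasInjectiveDimensionLT_zero
  | succ n ih =>
    let S : ShortComplex (ModuleCat.{u} A) :=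
      ModuleCat.shortComplexOfCompEqZero ι (LinearMap.range ι).mkQ
        ι.exact_map_mkQ_range.linearMap_comp_eq_zero
    have hS : S.ShortExact := ModuleCat.shortComplex_shortExact S
      ι.exact_map_mkQ_range h3 (Submodule.mkQ_surjective _)
    have hK := ih (I 0 ⧸ LinearMap.range ι) (fun i => I (i + 1)) (fun i => δ (i + 1))
      ((LinearMap.range ι).liftQ (δ 0) h4.le)
      (fun i => h1 _) (fun i hi => h2 _ (by omega)) ?_ ?_ (fun i => h5 _)
    · have h0 : Injective (I 0) := (Module.injective_iff_injective_object A (I 0)).1 (h1 0)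
      exact hS.hasInjectiveDimensionLT_X₁ n hK
        (hasInjectiveDimensionLT_of_ge (I 0) 1 _ (by omega))
    · rw [← LinearMap.ker_eq_bot]
      exact Submodule.ker_liftQ_eq_bot _ _ _ h4.ge
    · rw [Submodule.range_liftQ]
      exact h5 0

lemma injDim_of_projDim (d : ℕ)
    (hproj : ∀ P : ModuleCat.{u} A, Projective P → HasInjectiveDimensionLT P (d + 1))
    (n : ℕ) (X : ModuleCat.{u} A) (hX : HasProjectiveDimensionLT X (n + 1)) :
    HasInjectiveDimensionLT X (d + 1) := by
  induction n generalizing X with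
  | zero => exact hproj X (projective_iff_hasProjectiveDimensionLT_one.2 hX)
  | succ n ih =>
    have hS := X.shortExact_projectiveShortComplex
    have hP : Projective X.projectiveShortComplex.X₂ :=
      (IsProjective.iff_projective (R := A) _).1 inferInstance
    have h1 := ih _ ((hS.hasProjectiveDimensionLT_X₃_iff n hP).1 hX)
    exact hS.hasInjectiveDimensionLT_X₃ (d + 1) (hproj _ hP)
      (hasInjectiveDimensionLT_of_ge _ (d + 1) _ (by omega))

lemma projDim_le_of_finite (d : ℕ)
    (hproj : ∀ P : ModuleCat.{u} A, Projective P → HasInjectiveDimensionLT P (d + 1))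
    (X : ModuleCat.{u} A) (hX : ∃ n, HasProjectiveDimensionLT X (n + 1)) :
    HasProjectiveDimensionLT X (d + 1) := by
  refine projDim_of_class (fun X => ∃ n, HasProjectiveDimensionLT X (n + 1))
    (fun X hX => ?_) d X hX fun Y ⟨n, hn⟩ x => ?_
  · obtain ⟨n, hn⟩ := hX
    have hS := X.shortExact_projectiveShortComplex
    have hP : Projective X.projectiveShortComplex.X₂ :=
      (IsProjective.iff_projective (R := A) _).1 inferInstance
    exact ⟨n, (hS.hasProjectiveDimensionLT_X₃_iff n hP).1
      (hasProjectiveDimensionLT_of_ge X (n + 1) _ (by omega))⟩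
  · have := injDim_of_projDim d hproj n Y hn
    exact x.eq_zero_of_hasInjectiveDimensionLT (d + 1) le_rfl

lemma projRes_of_projDim (n : ℕ) (M : ModuleCat.{u} A)
    (h : HasProjectiveDimensionLT M (n + 1)) : HasProjDimLE A M n := by
  induction n generalizing M with
  | zero =>
    have hP : Module.Projective A M :=
      (IsProjective.iff_projective M).2 (projective_iff_hasProjectiveDimensionLT_one.2 h)
    refine ⟨fun i => match i with | 0 => M | _ + 1 => ModuleCat.of A PUnit.{u + 1},
      fun i => match i with | 0 => 0 | _ + 1 => 0, LinearMap.id, ?_, ?_, ?_, ?_, ?_⟩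
    · rintro (_ | i)
      · exact hP
      · exact inferInstanceAs (Module.Projective A PUnit.{u + 1})
    · rintro (_ | i) hi
      · omega
      · exact inferInstanceAs (Subsingleton PUnit.{u + 1})
    · exact Function.surjective_id
    · simp
    · intro i
      ext x
      have : x = 0 := Subsingleton.elim (α := PUnit.{u + 1}) x 0
      simp [this]
  | succ n ih =>
    have hS := M.shortExact_projectiveShortComplex
    have hF : Module.Projective A M.projectiveShortComplex.X₂ := inferInstance
    have hP : Projective M.projectiveShortComplex.X₂ :=
      (IsProjective.iff_projective (R := A) _).1 hF
    obtain ⟨P, δ, ε, h1, h2, h3, h4, h5⟩ :=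
      ih _ ((hS.hasProjectiveDimensionLT_X₃_iff n hP).1 h)
    have hex := (ShortComplex.ShortExact.moduleCat_exact_iff_function_exact _).1 hS.exact
    have hin : Function.Injective M.projectiveShortComplex.f.hom :=
      (ModuleCat.mono_iff_injective _).1 hS.mono_f
    refine ⟨fun i => match i with | 0 => M.projectiveShortComplex.X₂ | i + 1 => P i,
      fun i => match i with | 0 => M.projectiveShortComplex.f.hom ∘ₗ ε | i + 1 => δ i,
      M.projectiveShortComplex.g.hom, ?_, ?_, ?_, ?_, ?_⟩
    · rintro (_ | i)
      · exact hF
      · exact h1 i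
    · rintro (_ | i) hi
      · omega
      · exact h2 i (by omega)
    · exact (ModuleCat.epi_iff_surjective _).1 hS.epi_g
    · refine (LinearMap.range_comp_of_range_eq_top _ (LinearMap.range_eq_top.2 h3)).trans ?_
      exact (LinearMap.exact_iff.1 hex).symm
    · rintro (_ | i)
      · refine h4.trans ?_
        exact (LinearMap.ker_comp_of_ker_eq_bot _ (LinearMap.ker_eq_bot.2 hin)).symm
      · exact h5 i

end FlatPD

/-- Over a left and right Noetherian ring of injective dimension at most `d` as a left
module over itself and of finite injective dimension as a right module over itself
(a right `A`-module being the same thing as a left `Aᵐᵒᵖ`-module), every left module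
of finite flat dimension has projective dimension at most `d`. -/
theorem projDimLE_of_finite_flatDim_of_iwanagaGorenstein
    (A : Type u) [Ring A] [IsNoetherianRing A] [IsNoetherianRing Aᵐᵒᵖ] (d : ℕ)
    (hA_left : HasInjDimLE A A d) (hA_right : ∃ e : ℕ, HasInjDimLE Aᵐᵒᵖ Aᵐᵒᵖ e)
    (M : Type u) [AddCommGroup M] [Module A M]
    (hM : ∃ n : ℕ, HasFlatDimLE A M n) :
    HasProjDimLE A M d := by
  obtain ⟨I, δ, ι, h1, h2, h3, h4, h5⟩ := hA_left
  have hA := FlatPD.injDim_of_injRes (d + 1) A I δ ι h1 (fun i hi => h2 i (by omega)) h3 h4 h5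
  obtain ⟨n, F, δ', ε, g1, g2, g3, g4, g5⟩ := hM
  have hfin := FlatPD.projDim_of_flatRes d (n + 1) (FlatPD.projDim_flat d hA) M F δ' ε g1
    (fun i hi => g2 i (by omega)) g3 g4 g5
  refine FlatPD.projRes_of_projDim d (ModuleCat.of A M)
    (FlatPD.projDim_le_of_finite d (fun P hP => ?_) _ ⟨_, hfin⟩)
  have : Module.Projective A P := (IsProjective.iff_projective P).2 hP
  exact FlatPD.injDim_flat d hA P (FlatPD.flat_of_free P)
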